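/- arXiv:1506.02517 — 5 statements merged into one kernel-verified Lean document; each statement's English description precedes it below -/
import Mathlib

section
/- Let n ≥ 1 and q ≥ 1 be integers, let p be a real number with 1 ≤ p < ∞, and let x, y ∈ ℤ^n. Then the p-Lee distance between the reductions of x and y modulo q equals the distance induced on (ℤ/qℤ)^n by the ℓ_p distance on ℤ^n: (∑_{i=1}^n d_Lee(x̄_i, ȳ_i)^p)^{1/p} = inf { d_p(x + q·t, y + q·w) : t, w ∈ ℤ^n }, and this infimum is attained. -/
open Finset

/-- The `ℓ_p` distance on `ℤ^n` for a real parameter `p`. -/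
noncomputable def dp (n : ℕ) (p : ℝ) (x y : Fin n → ℤ) : ℝ :=
  (∑ i, (|x i - y i| : ℝ) ^ p) ^ (1 / p)

/-- The Lee distance on `ℤ/qℤ`. -/
def dLee {q : ℕ} (x y : ZMod q) : ℕ := min (x - y).val (y - x).val

/-- The `p`-Lee distance on `(ℤ/qℤ)^n`. -/
noncomputable def dpLee (n q : ℕ) (p : ℝ) (x y : Fin n → ZMod q) : ℝ :=
  (∑ i, (dLee (x i) (y i) : ℝ) ^ p) ^ (1 / p)

/-!
The Lee distance between two residue classes is the absolute value of the representative of their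
difference closest to zero (Mathlib's `ZMod.valMinAbs`), that is, the smallest distance between
representatives of the two classes. The coordinates of `t` and `w` can be chosen independently, and
the `ℓ_p` distance is monotone in each coordinate distance, so it is minimized by minimizing every
coordinate separately.
-/

theorem dLee_eq_natAbs_valMinAbs {q : ℕ} (a b : ZMod q) :
    dLee a b = (a - b).valMinAbs.natAbs := by
  rw [dLee, ← neg_sub a b]
  generalize a - b = c
  rcases eq_zero_or_neZero q with rfl | _
  -- On `ZMod 0 = ℤ` both `val` and `natAbs ∘ valMinAbs` are definitionally `Int.natAbs`.
  · exact (congrArg (min _) (Int.natAbs_neg c)).trans (min_self _)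
  · rw [ZMod.valMinAbs_natAbs_eq_min, ZMod.neg_val]
    split_ifs with hc
    · simp [hc]
    · rfl

theorem natAbs_valMinAbs_intCast_le (q : ℕ) (a : ℤ) :
    (a : ZMod q).valMinAbs.natAbs ≤ a.natAbs := by
  rcases eq_zero_or_neZero q with rfl | _
  · exact (congrArg Int.natAbs Int.cast_id).le
  · exact ZMod.natAbs_min_of_le_div_two q _ _ (ZMod.coe_valMinAbs _) (ZMod.natAbs_valMinAbs_le _)

theorem dLee_intCast_le_abs_sub (q : ℕ) (a b : ℤ) :
    (dLee (a : ZMod q) (b : ZMod q) : ℤ) ≤ |a - b| := by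
  rw [dLee_eq_natAbs_valMinAbs, ← Int.cast_sub, Int.abs_eq_natAbs]
  exact_mod_cast natAbs_valMinAbs_intCast_le q (a - b)

theorem exists_dLee_intCast_eq_abs_sub (q : ℕ) (a b : ℤ) :
    ∃ t : ℤ, (dLee (a : ZMod q) (b : ZMod q) : ℤ) = |a + q * t - b| := by
  have hmod : (q : ℤ) ∣ ((a : ZMod q) - b).valMinAbs - (a - b) := by
    rw [← ZMod.intCast_eq_intCast_iff_dvd_sub, ZMod.coe_valMinAbs, Int.cast_sub]
  obtain ⟨t, ht⟩ := hmod
  have hrep : ((a : ZMod q) - b).valMinAbs = a + q * t - b := by linarith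
  exact ⟨t, by rw [dLee_eq_natAbs_valMinAbs, hrep, Int.abs_eq_natAbs]⟩

theorem dpLee_intCast_le_dp {n : ℕ} (q : ℕ) {p : ℝ} (hp : 0 ≤ p) (x y : Fin n → ℤ) :
    dpLee n q p (fun i => (x i : ZMod q)) (fun i => (y i : ZMod q)) ≤ dp n p x y := by
  unfold dpLee dp
  gcongr with i
  exact_mod_cast dLee_intCast_le_abs_sub q (x i) (y i)

theorem exists_dpLee_intCast_eq_dp {n : ℕ} (q : ℕ) (p : ℝ) (x y : Fin n → ℤ) :
    ∃ t : Fin n → ℤ, dpLee n q p (fun i => (x i : ZMod q)) (fun i => (y i : ZMod q)) =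
      dp n p (fun i => x i + q * t i) y := by
  choose t ht using fun i => exists_dLee_intCast_eq_abs_sub q (x i) (y i)
  have hdist (i : Fin n) :
      (dLee (x i : ZMod q) (y i : ZMod q) : ℝ) = |((x i + q * t i : ℤ) : ℝ) - y i| :=
    mod_cast ht i
  exact ⟨t, by simp only [dpLee, dp, hdist]⟩

theorem pLee_eq_induced_general (n q : ℕ) (p : ℝ) (hp : 0 < p) (x y : Fin n → ℤ) :
    IsLeast {d : ℝ | ∃ t w : Fin n → ℤ,
        d = dp n p (fun i => x i + q * t i) (fun i => y i + q * w i)}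
      (dpLee n q p (fun i => (x i : ZMod q)) (fun i => (y i : ZMod q))) := by
  constructor
  · obtain ⟨t, ht⟩ := exists_dpLee_intCast_eq_dp q p x y
    exact ⟨t, 0, by simpa using ht⟩
  · rintro _ ⟨t, w, rfl⟩
    simpa using dpLee_intCast_le_dp q hp.le (fun i => x i + q * t i) (fun i => y i + q * w i)

/-- The `p`-Lee distance between the reductions of `x, y ∈ ℤ^n` modulo `q` equals the
distance induced on `(ℤ/qℤ)^n` by the `ℓ_p` distance on `ℤ^n`, and the infimum defining
the induced distance is attained. -/
theorem pLee_eq_induced (n q : ℕ) (hn : 1 ≤ n) (hq : 1 ≤ q) (p : ℝ) (hp : 1 ≤ p)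
    (x y : Fin n → ℤ) :
    IsLeast {d : ℝ | ∃ t w : Fin n → ℤ,
        d = dp n p (fun i => x i + q * t i) (fun i => y i + q * w i)}
      (dpLee n q p (fun i => (x i : ZMod q)) (fun i => (y i : ZMod q))) :=
  pLee_eq_induced_general n q p (zero_lt_one.trans_le hp) x y
end

section
/- Let n ≥ 1 and r ≥ 1 be integers and let p be a real number with 1 ≤ p < ∞ such that n·r^p < (r+1)^p. Then B_p^n(n^{1/p}·r) = B_∞^n(r); that is, {x ∈ ℤ^n : ∑_{i=1}^n |x_i|^p ≤ n·r^p} = {x ∈ ℤ^n : max_{1≤i≤n} |x_i| ≤ r}. -/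
open Finset

section

variable {ι : Type*} {s : Finset ι} {f : ι → ℝ} {c p : ℝ}

theorem lt_of_sum_rpow_lt_rpow (hf : ∀ i ∈ s, 0 ≤ f i) (hc : 0 ≤ c) (hp : 0 ≤ p)
    (h : ∑ i ∈ s, f i ^ p < c ^ p) {i : ι} (hi : i ∈ s) : f i < c := by
  have single_le : f i ^ p ≤ ∑ j ∈ s, f j ^ p :=
    single_le_sum (fun j hj ↦ Real.rpow_nonneg (hf j hj) p) hi
  exact (Real.monotoneOn_rpow_Ici_of_exponent_nonneg hp).reflect_lt
    (hf i hi) hc (single_le.trans_lt h)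

theorem sum_rpow_le_card_mul_rpow (hf : ∀ i ∈ s, 0 ≤ f i) (hp : 0 ≤ p)
    (h : ∀ i ∈ s, f i ≤ c) : ∑ i ∈ s, f i ^ p ≤ #s * c ^ p := by
  rw [← nsmul_eq_mul]
  exact sum_le_card_nsmul s _ _ fun i hi ↦ Real.rpow_le_rpow (hf i hi) (h i hi) hp

end

theorem ball_p_eq_ball_inf_general {ι : Type*} [Fintype ι] {r : ℤ} (hr : 0 ≤ r) {p : ℝ}
    (hp : 0 ≤ p) (h : (Fintype.card ι : ℝ) * (r : ℝ) ^ p < ((r : ℝ) + 1) ^ p) :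
    {x : ι → ℤ | ∑ i, (|x i| : ℝ) ^ p ≤ (Fintype.card ι : ℝ) * (r : ℝ) ^ p} =
    {x : ι → ℤ | ∀ i, |x i| ≤ r} := by
  ext x
  have coord_nonneg : ∀ i ∈ univ, 0 ≤ (|x i| : ℝ) := fun i _ ↦ abs_nonneg _
  refine ⟨fun hx i ↦ ?_, fun hx ↦ ?_⟩
  · have coord_lt : (|x i| : ℝ) < r + 1 :=
      lt_of_sum_rpow_lt_rpow coord_nonneg (by positivity) hp (hx.trans_lt h) (mem_univ i)
    exact Int.lt_add_one_iff.mp (by exact_mod_cast coord_lt)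
  · exact sum_rpow_le_card_mul_rpow coord_nonneg hp fun i _ ↦ by exact_mod_cast hx i

/-- If `n·r^p < (r+1)^p` for an integer `r ≥ 1`, then the `ℓ_p` ball of radius
`n^{1/p}·r` in `ℤ^n` coincides with the `ℓ_∞` ball of radius `r`. -/
theorem ball_p_eq_ball_inf (n : ℕ) (hn : 1 ≤ n) (r : ℤ) (hr : 1 ≤ r)
    (p : ℝ) (hp : 1 ≤ p) (h : (n : ℝ) * (r : ℝ) ^ p < ((r : ℝ) + 1) ^ p) :
    {x : Fin n → ℤ | ∑ i, (|x i| : ℝ) ^ p ≤ (n : ℝ) * (r : ℝ) ^ p} =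
    {x : Fin n → ℤ | ∀ i, |x i| ≤ r} := by
  simpa only [Fintype.card_fin] using ball_p_eq_ball_inf_general (ι := Fin n)
    (zero_le_one.trans hr) (zero_le_one.trans hp) (by simpa only [Fintype.card_fin] using h)
end

section
/- Let n ≥ 2 and r ≥ 1 be integers and let p be a real number with p > log(n)/log(1 + 1/r). If C ⊆ ℤ^n is an r-perfect code in the ℓ_∞ metric (the translates c + B_∞^n(r), c ∈ C, partition ℤ^n), then C is an (n^{1/p}·r)-perfect code in the ℓ_p metric (the translates c + B_p^n(n^{1/p}·r), c ∈ C, partition ℤ^n). In particular, since the subgroup (2r+1)ℤ^n is an r-perfect code in the ℓ_∞ metric, perfect codes in ℤ^n in the ℓ_p metric with radius n^{1/p}·r exist whenever p > log(n)/log(1 + 1/r). -/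
open Finset

/-!
The metrics compare as `d_∞ ≤ d_p ≤ n ^ (1 / p) * d_∞`, and `p > log n / log (1 + 1 / r)` says
exactly that `n ^ (1 / p) * r < r + 1`. Since `d_∞` takes integer values on `ℤ ^ n`, the `ℓ_p` balls
of radius `n ^ (1 / p) * r` are then the `ℓ_∞` balls of radius `r`.
-/

/-- `C` is an `r`-perfect code for the distance `d`: the balls of radius `r` centred at the points
of `C` partition the space. The distance is an explicit argument so that `dp n p` and `dist`, which
is the `ℓ_∞` distance on `Fin n → ℤ`, can be compared on one type. -/
def IsPerfectCode {X : Type*} (d : X → X → ℝ) (r : ℝ) (C : Set X) : Prop :=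
  ∀ z, ∃! c, c ∈ C ∧ d z c ≤ r

theorem isPerfectCode_congr {X : Type*} {d d' : X → X → ℝ} {r r' : ℝ}
    (h : ∀ x y, d x y ≤ r ↔ d' x y ≤ r') (C : Set X) :
    IsPerfectCode d r C ↔ IsPerfectCode d' r' C := by
  simp only [IsPerfectCode, h]

theorem IsPerfectCode.pi {ι : Type*} [Fintype ι] {X : ι → Type*} [∀ i, PseudoMetricSpace (X i)]
    {r : ℝ} (hr : 0 ≤ r) {C : ∀ i, Set (X i)} (hC : ∀ i, IsPerfectCode dist r (C i)) :
    IsPerfectCode dist r (Set.univ.pi C) := by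
  intro z
  choose c hc hc_unique using fun i => hC i (z i)
  refine ⟨c, ⟨fun i _ => (hc i).1, (dist_pi_le_iff hr).2 fun i => (hc i).2⟩, ?_⟩
  rintro c' ⟨hc'_mem, hc'_dist⟩
  exact funext fun i => hc_unique i (c' i) ⟨hc'_mem i trivial, (dist_pi_le_iff hr).1 hc'_dist i⟩

theorem int_dist_le_natCast_iff {x y : ℤ} {r : ℕ} : dist x y ≤ r ↔ |x - y| ≤ (r : ℤ) := by
  rw [Int.dist_eq']
  exact_mod_cast Iff.rfl

theorem isPerfectCode_dist_iff {ι : Type*} [Fintype ι] {r : ℕ} {C : Set (ι → ℤ)} :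
    IsPerfectCode dist r C ↔ ∀ z : ι → ℤ, ∃! c, c ∈ C ∧ ∀ i, |z i - c i| ≤ (r : ℤ) := by
  simp only [IsPerfectCode, dist_pi_le_iff r.cast_nonneg, int_dist_le_natCast_iff]

theorem isPerfectCode_setOf_dvd (r : ℕ) :
    IsPerfectCode dist r {c : ℤ | 2 * (r : ℤ) + 1 ∣ c} := by
  intro z
  simp only [Set.mem_ofPred_eq, int_dist_le_natCast_iff]
  obtain ⟨b, hb_dvd, hb_abs⟩ : ∃ b : ℤ, 2 * (r : ℤ) + 1 ∣ z - b ∧ |b| ≤ r := by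
    have hlower := Int.le_bmod (x := z) (m := 2 * r + 1) (by positivity)
    have hupper := Int.bmod_lt (x := z) (m := 2 * r + 1) (by positivity)
    exact ⟨z.bmod (2 * r + 1), by exact_mod_cast Int.dvd_self_sub_bmod, abs_le.2 (by omega)⟩
  refine ⟨z - b, ⟨hb_dvd, by rwa [sub_sub_cancel]⟩, ?_⟩
  rintro c ⟨hc_dvd, hc_abs⟩
  have hclose : |c - (z - b)| < 2 * (r : ℤ) + 1 :=
    calc |c - (z - b)| = |b - (z - c)| := by congr 1; ring
      _ ≤ |b| + |z - c| := abs_sub _ _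
      _ < 2 * (r : ℤ) + 1 := by omega
  exact sub_eq_zero.1 (Int.eq_zero_of_abs_lt_dvd (dvd_sub hc_dvd hb_dvd) hclose)

theorem dist_le_dp {n : ℕ} {p : ℝ} (hp : 0 < p) (x y : Fin n → ℤ) : dist x y ≤ dp n p x y := by
  have hterm (i : Fin n) : 0 ≤ |(x i : ℝ) - y i| ^ p := by positivity
  have hsum : 0 ≤ ∑ i, |(x i : ℝ) - y i| ^ p := sum_nonneg fun i _ => hterm i
  rw [dp, one_div, dist_pi_le_iff (by positivity)]
  intro i
  rw [Int.dist_eq, Real.le_rpow_inv_iff_of_pos (abs_nonneg _) hsum hp]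
  exact single_le_sum (fun j _ => hterm j) (mem_univ i)

theorem dp_le_rpow_mul_dist {n : ℕ} {p : ℝ} (hp : 0 < p) (x y : Fin n → ℤ) :
    dp n p x y ≤ (n : ℝ) ^ (1 / p) * dist x y := by
  have hsum : 0 ≤ ∑ i, |(x i : ℝ) - y i| ^ p := sum_nonneg fun i _ => by positivity
  rw [dp, one_div, Real.rpow_inv_le_iff_of_pos hsum (by positivity) hp]
  calc ∑ i, |(x i : ℝ) - y i| ^ p ≤ ∑ _i : Fin n, dist x y ^ p := by
        gcongr with i
        exact dist_le_pi_dist x y i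
    _ = n * dist x y ^ p := by rw [sum_const, card_univ, Fintype.card_fin, nsmul_eq_mul]
    _ = ((n : ℝ) ^ p⁻¹ * dist x y) ^ p := by
        rw [Real.mul_rpow (by positivity) dist_nonneg, Real.rpow_inv_rpow n.cast_nonneg hp.ne']

theorem dp_le_iff_dist_le {n r : ℕ} {p : ℝ} (hp : 0 < p) (h : (n : ℝ) ^ (1 / p) * r < r + 1)
    (x y : Fin n → ℤ) : dp n p x y ≤ (n : ℝ) ^ (1 / p) * r ↔ dist x y ≤ r := by
  constructor
  · intro hdp
    have hdist : dist x y < r + 1 := (dist_le_dp hp x y).trans_lt (hdp.trans_lt h)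
    refine (dist_pi_le_iff r.cast_nonneg).2 fun i => int_dist_le_natCast_iff.2 ?_
    have hcoord : (|x i - y i| : ℤ) < (r + 1 : ℝ) := by
      rw [← Int.dist_eq']
      exact (dist_le_pi_dist x y i).trans_lt hdist
    exact Int.lt_add_one_iff.1 (by exact_mod_cast hcoord)
  · intro hdist
    exact (dp_le_rpow_mul_dist hp x y).trans (by gcongr)

theorem rpow_one_div_mul_lt_add_one_iff {a r p : ℝ} (ha : 0 < a) (hr : 0 < r) (hp : 0 < p) :
    a ^ (1 / p) * r < r + 1 ↔ Real.log a / Real.log (1 + 1 / r) < p := by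
  have hbase : 1 < 1 + 1 / r := lt_add_of_pos_right 1 (by positivity)
  calc a ^ (1 / p) * r < r + 1 ↔ a ^ p⁻¹ < 1 + 1 / r := by
        rw [← lt_div_iff₀ hr, add_div, div_self hr.ne', one_div p]
    _ ↔ a < (1 + 1 / r) ^ p := Real.rpow_inv_lt_iff_of_pos ha.le (by positivity) hp
    _ ↔ Real.log a < p * Real.log (1 + 1 / r) := Real.lt_rpow_iff_log_lt ha (by positivity)
    _ ↔ Real.log a / Real.log (1 + 1 / r) < p := (div_lt_iff₀ (Real.log_pos hbase)).symm

/-- If `p > log(n)/log(1 + 1/r)`, then every `r`-perfect code in `ℤ^n` in the `ℓ_∞`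
metric is an `n^{1/p}·r`-perfect code in the `ℓ_p` metric; in particular (since
`(2r+1)ℤ^n` is `r`-perfect in the `ℓ_∞` metric) perfect codes in the `ℓ_p` metric with
radius `n^{1/p}·r` exist under this condition. -/
theorem perfect_inf_is_perfect_p (n : ℕ) (hn : 2 ≤ n) (r : ℕ) (hr : 1 ≤ r) (p : ℝ)
    (hp : Real.log n / Real.log (1 + 1 / (r : ℝ)) < p) :
    (∀ C : Set (Fin n → ℤ),
        (∀ z : Fin n → ℤ, ∃! c, c ∈ C ∧ ∀ i, |z i - c i| ≤ (r : ℤ)) →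
        (∀ z : Fin n → ℤ, ∃! c, c ∈ C ∧ dp n p z c ≤ (n : ℝ) ^ (1 / p) * r)) ∧
    (∃ C : Set (Fin n → ℤ),
        ∀ z : Fin n → ℤ, ∃! c, c ∈ C ∧ dp n p z c ≤ (n : ℝ) ^ (1 / p) * r) := by
  have hn_pos : (0 : ℝ) < n := by positivity
  have hr_pos : (0 : ℝ) < r := by positivity
  have hp_pos : 0 < p :=
    (div_nonneg (Real.log_natCast_nonneg n)
      (Real.log_nonneg (le_add_of_nonneg_right (by positivity)))).trans_lt hp
  have hradius : (n : ℝ) ^ (1 / p) * r < r + 1 :=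
    (rpow_one_div_mul_lt_add_one_iff hn_pos hr_pos hp_pos).2 hp
  have hcode (C : Set (Fin n → ℤ)) :
      IsPerfectCode (dp n p) ((n : ℝ) ^ (1 / p) * r) C ↔ IsPerfectCode dist r C :=
    isPerfectCode_congr (dp_le_iff_dist_le hp_pos hradius) C
  have hlattice : IsPerfectCode dist r (Set.univ.pi fun _ : Fin n => {c | 2 * (r : ℤ) + 1 ∣ c}) :=
    .pi r.cast_nonneg fun _ => isPerfectCode_setOf_dvd r
  exact ⟨fun C hC => (hcode C).2 (isPerfectCode_dist_iff.2 hC), _, (hcode _).2 hlattice⟩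
end

section
/- Let n ≥ 1 be an integer and p a real number with 1 ≤ p < ∞. (i) For every x ∈ ℤ^n there exists y ∈ ℤ^n with d_p(y,0) ≤ d_p(x,0)/2 and d_p(x,y) ≤ d_p(x,0)/2 + n^{1/p}/2. (ii) Consequently, for every nontrivial additive subgroup Λ ⊆ ℤ^n: if R is a real number with R < d_p(Λ)/2, then the balls B_p^n(c,R), c ∈ Λ, are pairwise disjoint; and if R ≥ d_p(Λ)/2 + n^{1/p}/2, then there exist two distinct points of Λ whose balls of radius R intersect. -/
open Finset

/-! Rounding each coordinate of `x / 2` towards zero moves it by at most `1 / 2`, hence moves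
`x / 2` by at most `n ^ (1 / p) / 2` in `ℓ_p`, and it never increases an absolute value; the
resulting integer point is thus an approximate midpoint of `0` and `x`. Applied to a shortest
nonzero vector `x` of `Λ`, this produces a common point of the balls around `0` and `x`. -/

open Metric
open scoped ENNReal

section TruncatedDivision

variable {K : Type*} [Field K] [LinearOrder K] [IsStrictOrderedRing K]

lemma abs_cast_tdiv_le (a b : ℤ) : |((a.tdiv b : ℤ) : K)| ≤ |(a : K) / b| := by
  rw [← Int.cast_abs, Int.abs_eq_natAbs, Int.natAbs_tdiv, Int.cast_natCast]
  exact Nat.cast_div_le.trans_eq (by simp only [Nat.cast_natAbs, Int.cast_abs, abs_div])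

lemma abs_half_sub_cast_tdiv_two_le (a : ℤ) : |(a : K) / 2 - (a.tdiv 2 : ℤ)| ≤ 1 / 2 := by
  have hdiv : (a : K) = 2 * (a.tdiv 2 : ℤ) + (a.tmod 2 : ℤ) := by
    exact_mod_cast (Int.mul_tdiv_add_tmod a 2).symm
  have hmod : |((a.tmod 2 : ℤ) : K)| ≤ 1 := by
    rcases Int.tmod_two_eq a with h | h | h <;> simp [h]
  calc |(a : K) / 2 - (a.tdiv 2 : ℤ)| = |((a.tmod 2 : ℤ) : K) / 2| := by
        congr 1
        linear_combination hdiv / 2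
    _ ≤ 1 / 2 := by
        rw [abs_div, abs_two]
        gcongr

end TruncatedDivision

section LpSpace

variable {ι : Type*} [Fintype ι] {p : ℝ≥0∞}

lemma piLp_norm_le_norm_of_forall_norm_le {E F : ι → Type*} [∀ i, SeminormedAddCommGroup (E i)]
    [∀ i, SeminormedAddCommGroup (F i)] {u : PiLp p E} {v : PiLp p F}
    (h : ∀ i, ‖u i‖ ≤ ‖v i‖) : ‖u‖ ≤ ‖v‖ := by
  rcases p.trichotomy with rfl | rfl | hp
  · rw [PiLp.norm_eq_card, PiLp.norm_eq_card]
    have hsupp : {i | ‖u i‖ ≠ 0} ⊆ {i | ‖v i‖ ≠ 0} := fun i hu hv =>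
      hu (le_antisymm ((h i).trans_eq hv) (norm_nonneg _))
    exact Nat.cast_le.mpr (card_le_card (Set.Finite.toFinset_subset_toFinset.mpr hsupp))
  · rw [PiLp.norm_eq_ciSup, PiLp.norm_eq_ciSup]
    exact ciSup_mono (Set.finite_range _).bddAbove h
  · rw [PiLp.norm_eq_sum hp, PiLp.norm_eq_sum hp]
    gcongr with i
    exact h i

lemma piLp_dist_le_of_forall_dist_le [Fact (1 ≤ p)] {E : ι → Type*}
    [∀ i, PseudoMetricSpace (E i)] {u v : PiLp p E} {r : ℝ} (hr : 0 ≤ r)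
    (h : ∀ i, dist (u i) (v i) ≤ r) :
    dist u v ≤ (Fintype.card ι : ℝ) ^ (1 / p).toReal * r := by
  have hlip := (PiLp.lipschitzWith_toLp p E).dist_le_mul u.ofLp v.ofLp
  push_cast at hlip
  refine hlip.trans ?_
  gcongr
  exact (dist_pi_le_iff hr).mpr h

end LpSpace

section IntegerPoints

variable {ι : Type*}

/-- The inclusion of the integer lattice `ℤ^ι` into the real space `ℓ_p^ι`, through which the
lattice inherits the `ℓ_p` distance. -/
noncomputable def intToLp (p : ℝ≥0∞) : (ι → ℤ) →+ PiLp p (fun _ : ι => ℝ) where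
  toFun x := WithLp.toLp p fun i => (x i : ℝ)
  map_zero' := by ext; simp
  map_add' x y := by ext; simp

@[simp]
lemma intToLp_apply (p : ℝ≥0∞) (x : ι → ℤ) (i : ι) : intToLp p x i = x i := rfl

/-- The integer point obtained from `x / 2` by rounding each coordinate towards zero. Rounding
down instead would increase the absolute value of negative odd coordinates. -/
def truncHalf (x : ι → ℤ) : ι → ℤ := fun i => (x i).tdiv 2

variable [Fintype ι] (p : ℝ≥0∞) [Fact (1 ≤ p)] (x : ι → ℤ)

lemma norm_intToLp_truncHalf_le : ‖intToLp p (truncHalf x)‖ ≤ ‖intToLp p x‖ / 2 :=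
  calc ‖intToLp p (truncHalf x)‖ ≤ ‖(2⁻¹ : ℝ) • intToLp p x‖ := by
        refine piLp_norm_le_norm_of_forall_norm_le fun i => ?_
        simpa [truncHalf, div_eq_inv_mul] using abs_cast_tdiv_le (K := ℝ) (x i) 2
    _ = ‖intToLp p x‖ / 2 := by
        rw [norm_smul, norm_inv, Real.norm_two, inv_mul_eq_div]

lemma dist_half_smul_intToLp_truncHalf_le :
    dist ((2⁻¹ : ℝ) • intToLp p x) (intToLp p (truncHalf x)) ≤
      (Fintype.card ι : ℝ) ^ (1 / p).toReal / 2 := by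
  rw [div_eq_mul_one_div]
  refine piLp_dist_le_of_forall_dist_le one_half_pos.le fun i => ?_
  simpa [truncHalf, Real.dist_eq, div_eq_inv_mul] using
    abs_half_sub_cast_tdiv_two_le (K := ℝ) (x i)

lemma dist_intToLp_truncHalf_le :
    dist (intToLp p x) (intToLp p (truncHalf x)) ≤
      ‖intToLp p x‖ / 2 + (Fintype.card ι : ℝ) ^ (1 / p).toReal / 2 := by
  have hhalf : dist (intToLp p x) ((2⁻¹ : ℝ) • intToLp p x) = ‖intToLp p x‖ / 2 := by
    have hsub : intToLp p x - (2⁻¹ : ℝ) • intToLp p x = (2⁻¹ : ℝ) • intToLp p x := by module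
    rw [dist_eq_norm, hsub, norm_smul, norm_inv, Real.norm_two, inv_mul_eq_div]
  exact (dist_triangle _ ((2⁻¹ : ℝ) • intToLp p x) _).trans
    (add_le_add hhalf.le (dist_half_smul_intToLp_truncHalf_le p x))

end IntegerPoints

lemma disjoint_preimage_closedBall_of_lt_half {G E : Type*} [AddGroup G]
    [SeminormedAddCommGroup E] (f : G →+ E) {Λ : AddSubgroup G} {d R : ℝ}
    (hd : ∀ x ∈ Λ, x ≠ 0 → d ≤ ‖f x‖) (hR : R < d / 2) {c₁ c₂ : G} (hc₁ : c₁ ∈ Λ)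
    (hc₂ : c₂ ∈ Λ) (hne : c₁ ≠ c₂) :
    Disjoint (f ⁻¹' closedBall (f c₁) R) (f ⁻¹' closedBall (f c₂) R) := by
  have hdist : d ≤ dist (f c₁) (f c₂) := by
    rw [dist_eq_norm, ← map_sub]
    exact hd _ (Λ.sub_mem hc₁ hc₂) (sub_ne_zero.mpr hne)
  exact (closedBall_disjoint_closedBall (by linarith)).preimage f

theorem packing_radius_bounds_general {ι : Type*} [Fintype ι] (p : ℝ≥0∞) [Fact (1 ≤ p)]
    (Λ : AddSubgroup (ι → ℤ)) (d : ℝ)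
    (hd : IsLeast {e : ℝ | ∃ x ∈ Λ, x ≠ 0 ∧ e = ‖intToLp p x‖} d) :
    (∀ x : ι → ℤ, ∃ y : ι → ℤ, ‖intToLp p y‖ ≤ ‖intToLp p x‖ / 2 ∧
        dist (intToLp p x) (intToLp p y) ≤
          ‖intToLp p x‖ / 2 + (Fintype.card ι : ℝ) ^ (1 / p).toReal / 2) ∧
    (∀ R : ℝ, R < d / 2 → ∀ c₁ ∈ Λ, ∀ c₂ ∈ Λ, c₁ ≠ c₂ →
        Disjoint (intToLp p ⁻¹' closedBall (intToLp p c₁) R)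
          (intToLp p ⁻¹' closedBall (intToLp p c₂) R)) ∧
    (∀ R : ℝ, d / 2 + (Fintype.card ι : ℝ) ^ (1 / p).toReal / 2 ≤ R →
        ∃ c₁ ∈ Λ, ∃ c₂ ∈ Λ, c₁ ≠ c₂ ∧
          ¬ Disjoint (intToLp p ⁻¹' closedBall (intToLp p c₁) R)
              (intToLp p ⁻¹' closedBall (intToLp p c₂) R)) := by
  refine ⟨fun x => ⟨truncHalf x, norm_intToLp_truncHalf_le p x, dist_intToLp_truncHalf_le p x⟩,
    fun R hR c₁ hc₁ c₂ hc₂ hne => ?_, fun R hR => ?_⟩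
  · have hmin : ∀ x ∈ Λ, x ≠ 0 → d ≤ ‖intToLp p x‖ := fun x hx hx0 => hd.2 ⟨x, hx, hx0, rfl⟩
    exact disjoint_preimage_closedBall_of_lt_half _ hmin hR hc₁ hc₂ hne
  · obtain ⟨x, hx, hx0, rfl⟩ := hd.1
    have hroot : 0 ≤ (Fintype.card ι : ℝ) ^ (1 / p).toReal := by positivity
    refine ⟨x, hx, 0, Λ.zero_mem, hx0, Set.not_disjoint_iff.mpr ⟨truncHalf x, ?_, ?_⟩⟩
    · rw [Set.mem_preimage, mem_closedBall']
      exact (dist_intToLp_truncHalf_le p x).trans hR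
    · rw [Set.mem_preimage, map_zero, mem_closedBall_zero_iff]
      linarith [norm_intToLp_truncHalf_le p x]

lemma dp_eq_dist_intToLp {n : ℕ} {p : ℝ} (hp : 0 < p) (x y : Fin n → ℤ) :
    dp n p x y = dist (intToLp (.ofReal p) x) (intToLp (.ofReal p) y) := by
  have htoReal : (ENNReal.ofReal p).toReal = p := ENNReal.toReal_ofReal hp.le
  rw [PiLp.dist_eq_sum (htoReal.symm ▸ hp), htoReal]
  rfl

/-- (i) Every `x ∈ ℤ^n` admits a point `y` with `d_p(y,0) ≤ d_p(x,0)/2` and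
`d_p(x,y) ≤ d_p(x,0)/2 + n^{1/p}/2`. (ii) Consequently, for a nontrivial additive
subgroup `Λ ⊆ ℤ^n` with minimum `ℓ_p` distance `d`: if `R < d/2` the balls of radius `R`
centered at points of `Λ` are pairwise disjoint, while if `R ≥ d/2 + n^{1/p}/2` two
distinct such balls intersect. -/
theorem packing_radius_bounds (n : ℕ) (hn : 1 ≤ n) (p : ℝ) (hp : 1 ≤ p)
    (Λ : AddSubgroup (Fin n → ℤ)) (hΛ : Λ ≠ ⊥) (d : ℝ)
    (hd : IsLeast {e : ℝ | ∃ x ∈ Λ, x ≠ 0 ∧ e = dp n p x 0} d) :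
    (∀ x : Fin n → ℤ, ∃ y : Fin n → ℤ, dp n p y 0 ≤ dp n p x 0 / 2 ∧
        dp n p x y ≤ dp n p x 0 / 2 + (n : ℝ) ^ (1 / p) / 2) ∧
    (∀ R : ℝ, R < d / 2 → ∀ c₁ ∈ Λ, ∀ c₂ ∈ Λ, c₁ ≠ c₂ →
        Disjoint {z : Fin n → ℤ | dp n p z c₁ ≤ R} {z : Fin n → ℤ | dp n p z c₂ ≤ R}) ∧
    (∀ R : ℝ, d / 2 + (n : ℝ) ^ (1 / p) / 2 ≤ R →
        ∃ c₁ ∈ Λ, ∃ c₂ ∈ Λ, c₁ ≠ c₂ ∧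
          ¬ Disjoint {z : Fin n → ℤ | dp n p z c₁ ≤ R}
              {z : Fin n → ℤ | dp n p z c₂ ≤ R}) := by
  have : Fact (1 ≤ ENNReal.ofReal p) := ⟨ENNReal.one_le_ofReal.mpr hp⟩
  have hp0 : 0 < p := one_pos.trans_le hp
  simp only [dp_eq_dist_intToLp hp0, map_zero, dist_zero_right] at hd ⊢
  simpa [hp0.le, closedBall] using packing_radius_bounds_general _ Λ d hd
end

section
/- Let n ≥ 1 be an integer, p a real number with 1 ≤ p < ∞, and set l = n^{1/p}/2. For every real r > l, one has V_{n,p}·(r − l)^n ≤ μ_p(n,r) ≤ V_{n,p}·(r + l)^n, where μ_p(n,r) is the number of integer points in the ℓ_p ball of radius r and V_{n,p} is the volume of the unit superball in ℝ^n. -/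
open Finset

/-- `μ_p(n,r)`: the number of integer points in the `ℓ_p` ball of radius `r` in `ℤ^n`. -/
noncomputable def mup (n : ℕ) (p r : ℝ) : ℕ :=
  Set.ncard {x : Fin n → ℤ | (∑ i, (|x i| : ℝ) ^ p) ^ (1 / p) ≤ r}

/-- `V_{n,p}`: the Lebesgue volume of the unit superball in `ℝ^n`. -/
noncomputable def Vnp (n : ℕ) (p : ℝ) : ℝ :=
  (MeasureTheory.volume {x : Fin n → ℝ | ∑ i, |x i| ^ p ≤ 1}).toReal

/-!
Tile `ℝ^ι` by the unit cubes centred at the integer points, so that counting integer points in a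
set is measuring the union of the corresponding cubes. If no point of a cube is farther than `l`
from its centre, the cubes centred in the ball of radius `r` are contained in the ball of radius
`r + l` and cover the ball of radius `r - l`; the volumes of these balls are known by homogeneity.
-/

open MeasureTheory

variable {ι : Type*} [Fintype ι]

lemma preimage_round_singleton (k : ℤ) :
    (round : ℝ → ℤ) ⁻¹' {k} = Set.Ico (k - 1 / 2 : ℝ) (k + 1 / 2) := by
  ext y
  simp only [Set.mem_preimage, Set.mem_singleton_iff, Set.mem_Ico, round_eq, Int.floor_eq_iff]
  constructor <;> rintro ⟨h₁, h₂⟩ <;> constructor <;> linarith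

lemma measurable_round : Measurable (round : ℝ → ℤ) := by
  simp only [funext round_eq]
  fun_prop

lemma measurePreserving_pi_round :
    MeasurePreserving (fun (y : ι → ℝ) i ↦ round (y i)) volume Measure.count := by
  have hmeas : Measurable fun (y : ι → ℝ) i ↦ round (y i) :=
    measurable_pi_lambda _ fun i ↦ measurable_round.comp (measurable_pi_apply i)
  refine ⟨hmeas, Measure.ext_of_singleton fun x ↦ ?_⟩
  have hcube : (fun (y : ι → ℝ) i ↦ round (y i)) ⁻¹' {x} =
      Set.univ.pi fun i ↦ Set.Ico (x i - 1 / 2 : ℝ) (x i + 1 / 2) := by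
    ext y
    simp only [← preimage_round_singleton, Set.mem_preimage, Set.mem_singleton_iff,
      Set.mem_univ_pi, funext_iff]
  rw [Measure.map_apply hmeas (measurableSet_singleton x), hcube, Real.volume_pi_Ico,
    Measure.count_singleton]
  norm_num

lemma count_real_eq_ncard {α : Type*} [MeasurableSpace α] {s : Set α} (hs : MeasurableSet s) :
    Measure.count.real s = s.ncard := by
  rw [measureReal_def, Measure.count_apply hs, Set.ncard_def]
  cases s.encard <;> simp

lemma volume_real_preimage_pi_round (s : Set (ι → ℤ)) :
    volume.real ((fun (y : ι → ℝ) i ↦ round (y i)) ⁻¹' s) = s.ncard := by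
  have hs : MeasurableSet s := .of_discrete
  rw [measurePreserving_pi_round.measureReal_preimage hs.nullMeasurableSet, count_real_eq_ncard hs]

lemma norm_sub_pi_round_le (y : ι → ℝ) : ‖y - fun i ↦ (round (y i) : ℝ)‖ ≤ 1 / 2 :=
  (pi_norm_le_iff_of_nonneg (by norm_num)).2 fun i ↦ abs_sub_round (y i)

open scoped Pointwise in
lemma addHaar_seminorm_closedBall {E : Type*} [NormedAddCommGroup E] [NormedSpace ℝ E]
    [MeasurableSpace E] [BorelSpace E] [FiniteDimensional ℝ E] (μ : Measure E)
    [μ.IsAddHaarMeasure] (N : Seminorm ℝ E) {r : ℝ} (hr : 0 < r) :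
    μ (N.closedBall 0 r) = ENNReal.ofReal (r ^ Module.finrank ℝ E) * μ (N.closedBall 0 1) := by
  have hball : N.closedBall 0 r = r • N.closedBall 0 1 := by
    rw [Seminorm.smul_closedBall_zero (norm_pos_iff.2 hr.ne'), Real.norm_of_nonneg hr.le, mul_one]
  rw [hball, Measure.addHaar_smul_of_nonneg μ hr.le]

lemma addHaar_real_seminorm_closedBall {E : Type*} [NormedAddCommGroup E] [NormedSpace ℝ E]
    [MeasurableSpace E] [BorelSpace E] [FiniteDimensional ℝ E] (μ : Measure E)
    [μ.IsAddHaarMeasure] (N : Seminorm ℝ E) {r : ℝ} (hr : 0 < r) :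
    μ.real (N.closedBall 0 r) = μ.real (N.closedBall 0 1) * r ^ Module.finrank ℝ E := by
  rw [measureReal_def, addHaar_seminorm_closedBall μ N hr, ENNReal.toReal_mul,
    ENNReal.toReal_ofReal (by positivity), measureReal_def, mul_comm]

lemma seminorm_closedBall_subset_preimage_pi_round {N : Seminorm ℝ (ι → ℝ)} {l : ℝ}
    (hl : ∀ y, ‖y‖ ≤ 1 / 2 → N y ≤ l) (r : ℝ) :
    N.closedBall 0 (r - l) ⊆
      (fun y i ↦ round (y i)) ⁻¹' {x : ι → ℤ | N (fun i ↦ (x i : ℝ)) ≤ r} := by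
  intro y hy
  rw [N.mem_closedBall_zero] at hy
  calc N (fun i ↦ (round (y i) : ℝ))
      ≤ N y + N (y - fun i ↦ (round (y i) : ℝ)) := le_map_add_map_sub' N _ y
    _ ≤ (r - l) + l := add_le_add hy (hl _ (norm_sub_pi_round_le y))
    _ = r := sub_add_cancel r l

lemma preimage_pi_round_subset_seminorm_closedBall {N : Seminorm ℝ (ι → ℝ)} {l : ℝ}
    (hl : ∀ y, ‖y‖ ≤ 1 / 2 → N y ≤ l) (r : ℝ) :
    (fun y i ↦ round (y i)) ⁻¹' {x : ι → ℤ | N (fun i ↦ (x i : ℝ)) ≤ r} ⊆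
      N.closedBall 0 (r + l) := by
  intro y (hy : N (fun i ↦ (round (y i) : ℝ)) ≤ r)
  rw [N.mem_closedBall_zero]
  calc N y ≤ N (fun i ↦ (round (y i) : ℝ)) + N (y - fun i ↦ (round (y i) : ℝ)) :=
        le_map_add_map_sub N y _
    _ ≤ r + l := add_le_add hy (hl _ (norm_sub_pi_round_le y))

theorem mup_bounds_general (N : Seminorm ℝ (ι → ℝ)) (hN : volume (N.closedBall 0 1) ≠ ⊤)
    {l r : ℝ} (hl : ∀ y, ‖y‖ ≤ 1 / 2 → N y ≤ l) (hr : l < r) :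
    volume.real (N.closedBall 0 1) * (r - l) ^ Fintype.card ι ≤
        {x : ι → ℤ | N (fun i ↦ (x i : ℝ)) ≤ r}.ncard ∧
      {x : ι → ℤ | N (fun i ↦ (x i : ℝ)) ≤ r}.ncard ≤
        volume.real (N.closedBall 0 1) * (r + l) ^ Fintype.card ι := by
  have hl₀ : 0 ≤ l := (apply_nonneg N 0).trans (hl 0 (by simp))
  have hadd : 0 < r + l := by linarith
  have hfinite : volume (N.closedBall 0 (r + l)) ≠ ⊤ := by
    rw [addHaar_seminorm_closedBall volume N hadd]
    finiteness
  have hinner := seminorm_closedBall_subset_preimage_pi_round hl r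
  have houter := preimage_pi_round_subset_seminorm_closedBall hl r
  rw [← volume_real_preimage_pi_round, ← Module.finrank_fintype_fun_eq_card ℝ,
    ← addHaar_real_seminorm_closedBall volume N (sub_pos.2 hr),
    ← addHaar_real_seminorm_closedBall volume N hadd]
  exact ⟨measureReal_mono hinner (measure_ne_top_of_subset houter hfinite),
    measureReal_mono houter hfinite⟩

/-- The `ℓ_p` norm `(∑ i, |x i| ^ p) ^ (1 / p)` as a seminorm on the plain product `ι → ℝ`, which
carries Lebesgue measure and whose own norm is the sup norm. -/
noncomputable def lpSeminorm (ι : Type*) [Fintype ι] {p : ℝ} (hp : 1 ≤ p) :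
    Seminorm ℝ (ι → ℝ) :=
  Seminorm.of (fun x ↦ (∑ i, |x i| ^ p) ^ (1 / p)) (fun x y ↦ Real.Lp_add_le univ x y hp)
    fun a x ↦ by
      have hp₀ : 0 < p := by positivity
      simp only [Pi.smul_apply, smul_eq_mul, abs_mul, Real.norm_eq_abs,
        Real.mul_rpow (abs_nonneg _) (abs_nonneg _)]
      rw [← mul_sum, Real.mul_rpow (by positivity) (by positivity), one_div,
        Real.rpow_rpow_inv (abs_nonneg a) hp₀.ne']

section lpSeminorm

variable {p : ℝ} (hp : 1 ≤ p)

lemma lpSeminorm_apply (x : ι → ℝ) : lpSeminorm ι hp x = (∑ i, |x i| ^ p) ^ (1 / p) := rfl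

lemma lpSeminorm_le_card_rpow_mul_norm (x : ι → ℝ) :
    lpSeminorm ι hp x ≤ (Fintype.card ι : ℝ) ^ (1 / p) * ‖x‖ := by
  have hp₀ : 0 < p := by positivity
  calc (∑ i, |x i| ^ p) ^ (1 / p) ≤ (∑ _i : ι, ‖x‖ ^ p) ^ (1 / p) := by
        gcongr with i
        exact norm_le_pi_norm x i
    _ = (Fintype.card ι : ℝ) ^ (1 / p) * ‖x‖ := by
        rw [sum_const, card_univ, nsmul_eq_mul, Real.mul_rpow (by positivity) (by positivity),
          one_div, Real.rpow_rpow_inv (norm_nonneg x) hp₀.ne']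

lemma lpSeminorm_le_of_norm_le_half (x : ι → ℝ) (hx : ‖x‖ ≤ 1 / 2) :
    lpSeminorm ι hp x ≤ (Fintype.card ι : ℝ) ^ (1 / p) / 2 := by
  refine (lpSeminorm_le_card_rpow_mul_norm hp x).trans ?_
  rw [div_eq_mul_one_div (_ ^ _) (2 : ℝ)]
  gcongr

lemma norm_le_lpSeminorm (x : ι → ℝ) : ‖x‖ ≤ lpSeminorm ι hp x := by
  refine (pi_norm_le_iff_of_nonneg (apply_nonneg _ x)).2 fun i ↦ ?_
  rw [lpSeminorm_apply, one_div,
    Real.le_rpow_inv_iff_of_pos (norm_nonneg _) (by positivity) (by positivity)]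
  exact single_le_sum (f := fun j ↦ |x j| ^ p) (fun j _ ↦ by positivity) (mem_univ i)

lemma volume_lpSeminorm_closedBall_ne_top (r : ℝ) :
    volume ((lpSeminorm ι hp).closedBall 0 r) ≠ ⊤ := by
  refine measure_ne_top_of_subset (fun x hx ↦ ?_) (measure_closedBall_lt_top (x := 0) (r := r)).ne
  rw [Seminorm.mem_closedBall_zero] at hx
  exact mem_closedBall_zero_iff.2 ((norm_le_lpSeminorm hp x).trans hx)

lemma Vnp_eq_volume_real_closedBall (n : ℕ) :
    Vnp n p = volume.real ((lpSeminorm (Fin n) hp).closedBall 0 1) := by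
  have hball : (lpSeminorm (Fin n) hp).closedBall 0 1 = {x | ∑ i, |x i| ^ p ≤ 1} := by
    ext x
    rw [Seminorm.mem_closedBall_zero, lpSeminorm_apply, Set.mem_ofPred_eq, one_div,
      Real.rpow_inv_le_iff_of_pos (by positivity) zero_le_one (by positivity), Real.one_rpow]
  rw [hball, Vnp, measureReal_def]

lemma mup_eq_ncard_lpSeminorm_le (n : ℕ) (r : ℝ) :
    mup n p r = {x : Fin n → ℤ | lpSeminorm (Fin n) hp (fun i ↦ (x i : ℝ)) ≤ r}.ncard := by
  simp only [mup, lpSeminorm_apply]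

end lpSeminorm

/-- With `l = n^{1/p}/2` and `r > l`, we have
`V_{n,p}·(r − l)^n ≤ μ_p(n,r) ≤ V_{n,p}·(r + l)^n`. -/
theorem mup_bounds (n : ℕ) (hn : 1 ≤ n) (p : ℝ) (hp : 1 ≤ p) (r : ℝ)
    (hr : (n : ℝ) ^ (1 / p) / 2 < r) :
    Vnp n p * (r - (n : ℝ) ^ (1 / p) / 2) ^ n ≤ (mup n p r : ℝ) ∧
    (mup n p r : ℝ) ≤ Vnp n p * (r + (n : ℝ) ^ (1 / p) / 2) ^ n := by
  rw [Vnp_eq_volume_real_closedBall hp, mup_eq_ncard_lpSeminorm_le hp]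
  simpa only [Fintype.card_fin] using
    mup_bounds_general (lpSeminorm (Fin n) hp) (volume_lpSeminorm_closedBall_ne_top hp 1)
      (lpSeminorm_le_of_norm_le_half hp) (by rwa [Fintype.card_fin])
end
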